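/- Let α, λ be real numbers with α > 0 and λ > 0. Every complex root of the polynomial p(s) = s³ + (α + λ)s² + αλ·s + 2α has negative real part if and only if λ(λ + α) > 2. Consequently, the equilibria (±√α, 0, 1) of the Shimizu–Morioka system are linearly stable exactly when λ(λ + α) > 2. -/

import Mathlib

/-- Routh–Hurwitz criterion for the Shimizu–Morioka secondary equilibria: for `α > 0`,
`λ > 0`, every complex root of `p(s) = s³ + (α+λ)s² + αλ·s + 2α` has negative real
part if and only if `λ(λ+α) > 2`; i.e., the equilibria `(±√α, 0, 1)` are linearly
stable exactly when `λ(λ+α) > 2`. -/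
theorem shimizuMorioka_secondary_stability (a l : ℝ) (ha : 0 < a) (hl : 0 < l) :
    (∀ s : ℂ,
        s ^ 3 + ((a : ℂ) + (l : ℂ)) * s ^ 2 + (a : ℂ) * (l : ℂ) * s + 2 * (a : ℂ) = 0 →
        s.re < 0) ↔
      2 < l * (l + a) := by
  constructor
  · intro h
    by_contra hc
    push Not at hc
    obtain ⟨r, hr, hr0⟩ : ∃ r ∈ Set.Icc (-(a + l + 2 * a + 1)) (-(a + l)),
        r ^ 3 + (a + l) * r ^ 2 + a * l * r + 2 * a = 0 := by
      have hcont : ContinuousOn (fun r : ℝ => r ^ 3 + (a + l) * r ^ 2 + a * l * r + 2 * a)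
          (Set.Icc (-(a + l + 2 * a + 1)) (-(a + l))) := by fun_prop
      have hle : -(a + l + 2 * a + 1) ≤ -(a + l) := by linarith
      refine intermediate_value_Icc hle hcont ⟨?_, ?_⟩
      · have h1 : 1 ≤ (a + l + 2 * a + 1) ^ 2 := by nlinarith
        have h2 : 0 ≤ a * l * (a + l + 2 * a + 1) := by positivity
        have h3 : 0 ≤ ((a + l + 2 * a + 1) ^ 2 - 1) * (2 * a + 1) :=
          mul_nonneg (by linarith) (by linarith)
        skip
        nlinarith
      · skip
        nlinarith [mul_nonneg ha.le (sub_nonneg.2 hc)]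
    obtain ⟨w, hw, hw0⟩ : ∃ w : ℂ,
        w ^ 2 = ((a + l + r : ℝ) : ℂ) ^ 2 - 4 * ((a * l + r * (a + l + r) : ℝ) : ℂ) ∧
          0 ≤ w.re := by
      obtain ⟨w, hw⟩ := IsAlgClosed.exists_pow_nat_eq
        (((a + l + r : ℝ) : ℂ) ^ 2 - 4 * ((a * l + r * (a + l + r) : ℝ) : ℂ)) (n := 2) (by norm_num)
      rcases le_total 0 w.re with h0 | h0
      · exact ⟨w, hw, h0⟩
      · exact ⟨-w, by rw [neg_sq, hw], by simpa using h0⟩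
    have hs := h ((-((a + l + r : ℝ) : ℂ) + w) * ((1 / 2 : ℝ) : ℂ)) (by
      have hrc : (r : ℂ) ^ 3 + (a + l) * r ^ 2 + a * l * r + 2 * a = 0 := by exact_mod_cast hr0
      push_cast at hw ⊢
      linear_combination ((-((a : ℂ) + l + r) + w) / 2 - r) / 4 * hw + hrc)
    rw [Complex.re_mul_ofReal] at hs
    simp only [Complex.add_re, Complex.neg_re, Complex.ofReal_re] at hs
    linarith [hr.2]
  · intro h s hs
    by_contra hx
    push Not at hx
    obtain ⟨x, y⟩ := s
    have h1 := congrArg Complex.re hs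
    have h2 := congrArg Complex.im hs
    simp [pow_succ] at h1 h2 hx
    have hal := mul_pos ha hl
    have h2' : y * (3 * x ^ 2 - y ^ 2 + 2 * (a + l) * x + a * l) = 0 := by linear_combination h2
    have h1' : x ^ 3 - 3 * x * y ^ 2 + (a + l) * (x ^ 2 - y ^ 2) + a * l * x + 2 * a = 0 := by
      linear_combination h1
    rcases mul_eq_zero.1 h2' with hy | hy
    · subst hy
      have : 0 < x ^ 3 + (a + l) * x ^ 2 + a * l * x + 2 * a := by positivity
      linarith
    · have e : 8 * x ^ 3 + 8 * (a + l) * x ^ 2 + 2 * ((a + l) ^ 2 + a * l) * x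
          + a * (l * (l + a) - 2) = 0 := by
        linear_combination (3 * x + (a + l)) * hy - h1'
      have p1 : 0 < a * (l * (l + a) - 2) := mul_pos ha (by linarith)
      have p2 : 0 ≤ 8 * x ^ 3 + 8 * (a + l) * x ^ 2 + 2 * ((a + l) ^ 2 + a * l) * x := by
        positivity
      linarith
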